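/- Let p be an odd prime and let Σ = {C₁, …, C_{p²+1}} be a complete set of p²+1 pairwise disjoint maximal commuting classes in U^{(p²)}. Suppose there exists exactly one maximal commuting class C_I with C_I ∉ Σ and C_I ⊆ C₁ ∪ … ∪ C_{p+1}. Then the p²−p+1 classes {C_I, C_{p+2}, …, C_{p²+1}} are pairwise disjoint and form an unextendible set of maximal commuting classes. -/

import Mathlib

/-!
Two-particle Pauli operators are labelled by vectors of `V = 𝔽_p⁴`, and two of them commute up to
the phase `ω ^ ⟨a, b⟩`, where `⟨·, ·⟩` is a symplectic form on `V` (`pauli_comm`). Nondegeneracy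
makes the labelling injective (`pauli_injective`) and bounds totally isotropic subspaces by
dimension two. Hence a maximal commuting class is the set of nonzero vectors of a Lagrangian plane
(`exists_lagrangian`), and two distinct classes share at most `p - 1` operators
(`ncard_inter_le`). A complete set covers all nontrivial operators, by counting (`iUnion_eq`).

Let `E` be a class avoiding `D` and `C i` for `i ≥ p + 1` (indices start at `0`). Then `E` lies in
the union of the first `p + 1` classes. If `E` is not one of the `C i`, uniqueness forces `E = D`,
which is absurd. If `E = C i` with `i < p + 1`, then the `p ^ 2 - 1` elements of `D` are covered by
its intersections with the `p` other initial classes, of size at most `p - 1` each; but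
`p * (p - 1) < p ^ 2 - 1`.
-/

open Matrix
open scoped Kronecker

noncomputable section

/-- ω = exp(2πi/p), a primitive p-th root of unity. -/
def omega_p (p : ℕ) : ℂ := Complex.exp (2 * Real.pi * Complex.I / p)

/-- Generalized Pauli X on ℂ^p : X e_j = e_{j+1}. -/
def genX (p : ℕ) : Matrix (ZMod p) (ZMod p) ℂ :=
  Matrix.of fun i j => if i = j + 1 then 1 else 0

/-- Generalized Pauli Z on ℂ^p : Z e_j = ω^j e_j. -/
def genZ (p : ℕ) : Matrix (ZMod p) (ZMod p) ℂ :=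
  Matrix.of fun i j => if i = j then omega_p p ^ j.val else 0

/-- The space of p² × p² complex matrices. -/
abbrev PauliMat (p : ℕ) := Matrix (ZMod p × ZMod p) (ZMod p × ZMod p) ℂ

/-- The set U^{(p²)} of p⁴ two-particle generalized Pauli operators
    (X^m Z^n) ⊗ (X^k Z^l), with m,n,k,l ∈ {0,…,p−1}. -/
def PauliSet (p : ℕ) [NeZero p] : Set (PauliMat p) :=
  { U | ∃ m n k l : ZMod p,
      U = (genX p ^ m.val * genZ p ^ n.val) ⊗ₖ (genX p ^ k.val * genZ p ^ l.val) }

/-- A maximal commuting class: a subset of U^{(p²)} \ {I} of cardinality p² − 1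
    whose elements pairwise commute. -/
def MaxCommClass (p : ℕ) [NeZero p] (C : Set (PauliMat p)) : Prop :=
  C ⊆ PauliSet p \ {1} ∧ C.ncard = p ^ 2 - 1 ∧ ∀ U ∈ C, ∀ V ∈ C, Commute U V

/-- U ∘ V: the unique element of U^{(p²)} such that U·V is a power of ω times it. -/
def circ (p : ℕ) [NeZero p] (U V : PauliMat p) : PauliMat p :=
  @Classical.epsilon _ ⟨(0 : PauliMat p)⟩
    fun W => W ∈ PauliSet p ∧ ∃ j : ℕ, U * V = omega_p p ^ j • W

/-- U^{∘k}: the unique element of U^{(p²)} such that the matrix power U^k is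
    a power of ω times it. -/
def cpow (p : ℕ) [NeZero p] (U : PauliMat p) (k : ZMod p) : PauliMat p :=
  @Classical.epsilon _ ⟨(0 : PauliMat p)⟩
    fun W => W ∈ PauliSet p ∧ ∃ j : ℕ, U ^ k.val = omega_p p ^ j • W

/-- Independence: U^k is not a scalar multiple of V^l for any (k,l) ≠ (0,0). -/
def Indep (p : ℕ) [NeZero p] (U V : PauliMat p) : Prop :=
  ∀ k l : ZMod p, (k, l) ≠ (0, 0) → ∀ c : ℂ, U ^ k.val ≠ c • V ^ l.val

/-- The class ⟨U,V⟩ generated by a pair of independent commuting operators: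
    {U^{∘k} ∘ V^{∘l} : (k,l) ≠ (0,0)}. -/
def genClass (p : ℕ) [NeZero p] (U V : PauliMat p) : Set (PauliMat p) :=
  { W | ∃ k l : ZMod p, (k, l) ≠ (0, 0) ∧ W = circ p (cpow p U k) (cpow p V l) }

/-- A complete set of p² + 1 pairwise disjoint maximal commuting classes. -/
def CompleteSet (p : ℕ) [NeZero p] (S : Set (Set (PauliMat p))) : Prop :=
  S.ncard = p ^ 2 + 1 ∧ (∀ C ∈ S, MaxCommClass p C) ∧ S.Pairwise Disjoint

/-- A family of classes is unextendible if no maximal commuting class is contained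
    in U^{(p²)} \ ({I} ∪ ⋃ F). -/
def Unextendible (p : ℕ) [NeZero p] (F : Set (Set (PauliMat p))) : Prop :=
  ¬ ∃ C : Set (PauliMat p), MaxCommClass p C ∧ C ⊆ PauliSet p \ ({1} ∪ ⋃₀ F)

/-! ### Single-particle operators -/

/-- The additive character `j ↦ ω ^ j` of `ZMod p`, with values in `ℂ`. -/
def chi (p : ℕ) [NeZero p] : AddChar (ZMod p) ℂ := ZMod.stdAddChar

lemma chi_injective (p : ℕ) [NeZero p] : Function.Injective (chi p) :=
  ZMod.injective_stdAddChar

lemma omega_pow_val (p : ℕ) [NeZero p] (j : ZMod p) : omega_p p ^ j.val = chi p j := by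
  rw [chi, ZMod.stdAddChar_apply, ZMod.toCircle_apply, omega_p, ← Complex.exp_nat_mul]
  congr 1
  ring

lemma chi_ne_zero (p : ℕ) [NeZero p] (j : ZMod p) : chi p j ≠ 0 := by
  rw [← omega_pow_val]
  exact pow_ne_zero _ (Complex.exp_ne_zero _)

/-- The single-particle operator `X ^ m * Z ^ n`. -/
def weyl (p : ℕ) [NeZero p] (m n : ZMod p) : Matrix (ZMod p) (ZMod p) ℂ :=
  genX p ^ m.val * genZ p ^ n.val

lemma genX_pow_apply (p : ℕ) [NeZero p] (m : ℕ) (i j : ZMod p) :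
    (genX p ^ m) i j = if i = j + m then 1 else 0 := by
  induction m generalizing j with
  | zero => simp [Matrix.one_apply]
  | succ m ih =>
    rw [pow_succ, Matrix.mul_apply, Finset.sum_eq_single (j + 1)]
    · rw [ih]
      simp only [genX, Matrix.of_apply, if_true, mul_one]
      congr 1
      push_cast
      rw [add_assoc, add_comm (1 : ZMod p)]
    · intro b _ hb
      simp [genX, hb]
    · simp

lemma genZ_eq (p : ℕ) [NeZero p] : genZ p = Matrix.diagonal (chi p) := by
  ext i j
  by_cases h : i = j
  · subst h
    simp [genZ, omega_pow_val]
  · simp [genZ, h]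

lemma weyl_apply (p : ℕ) [NeZero p] (m n i j : ZMod p) :
    weyl p m n i j = if i = j + m then chi p (n * j) else 0 := by
  rw [weyl, genZ_eq, Matrix.diagonal_pow, Matrix.mul_diagonal, genX_pow_apply]
  have h : chi p j ^ n.val = chi p (n * j) := by
    rw [← AddChar.map_nsmul_eq_pow]
    simp
  simp [h]

lemma weyl_mul (p : ℕ) [NeZero p] (m n k l : ZMod p) :
    weyl p m n * weyl p k l = chi p (n * k) • weyl p (m + k) (n + l) := by
  ext i j
  rw [Matrix.mul_apply, Finset.sum_eq_single (j + k)]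
  · simp only [weyl_apply, Matrix.smul_apply, if_true, smul_eq_mul]
    have h : j + k + m = j + (m + k) := by ring
    rw [h]
    split_ifs
    · rw [← AddChar.map_add_eq_mul, ← AddChar.map_add_eq_mul]
      congr 1
      ring
    · simp
  · intro b _ hb
    rw [weyl_apply p k l, if_neg hb, mul_zero]
  · simp

lemma weyl_zero (p : ℕ) [NeZero p] : weyl p 0 0 = 1 := by
  simp [weyl]

/-! ### Two-particle operators and the symplectic form -/

/-- The label space `𝔽_p⁴`; the vector `(m, n, k, l)` labels `X^m Z^n ⊗ X^k Z^l`. -/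
abbrev Label (p : ℕ) := ZMod p × ZMod p × ZMod p × ZMod p

/-- The two-particle Pauli operator with label `a`. -/
def pauli (p : ℕ) [NeZero p] (a : Label p) : PauliMat p :=
  weyl p a.1 a.2.1 ⊗ₖ weyl p a.2.2.1 a.2.2.2

lemma mem_pauliSet_iff (p : ℕ) [NeZero p] (U : PauliMat p) :
    U ∈ PauliSet p ↔ ∃ a, pauli p a = U := by
  constructor
  · rintro ⟨m, n, k, l, rfl⟩
    exact ⟨(m, n, k, l), rfl⟩
  · rintro ⟨a, rfl⟩
    exact ⟨_, _, _, _, rfl⟩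

lemma pauli_zero (p : ℕ) [NeZero p] : pauli p 0 = 1 := by
  simp [pauli, weyl_zero]

lemma pauli_mul (p : ℕ) [NeZero p] (a b : Label p) :
    pauli p a * pauli p b =
      chi p (a.2.1 * b.1 + a.2.2.2 * b.2.2.1) • pauli p (a + b) := by
  simp only [pauli, ← Matrix.mul_kronecker_mul, weyl_mul, Matrix.smul_kronecker,
    Matrix.kronecker_smul, smul_smul, AddChar.map_add_eq_mul]
  rw [mul_comm]
  rfl

lemma pauli_ne_zero (p : ℕ) [NeZero p] (a : Label p) : pauli p a ≠ 0 := by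
  intro h
  have h1 := congrFun (congrFun h (a.1, a.2.2.1)) (0, 0)
  simp [pauli, weyl_apply] at h1

/-- The symplectic form on the label space that governs commutation of Pauli operators. -/
def symp (p : ℕ) : LinearMap.BilinForm (ZMod p) (Label p) :=
  LinearMap.mk₂ (ZMod p)
    (fun a b => a.2.1 * b.1 - a.1 * b.2.1 + (a.2.2.2 * b.2.2.1 - a.2.2.1 * b.2.2.2))
    (by intros; simp; ring) (by intros; simp; ring)
    (by intros; simp; ring) (by intros; simp; ring)

lemma symp_apply (p : ℕ) (a b : Label p) :
    symp p a b = a.2.1 * b.1 - a.1 * b.2.1 + (a.2.2.2 * b.2.2.1 - a.2.2.1 * b.2.2.2) := rfl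

lemma pauli_comm (p : ℕ) [NeZero p] (a b : Label p) :
    pauli p a * pauli p b = chi p (symp p a b) • (pauli p b * pauli p a) := by
  rw [pauli_mul, pauli_mul, smul_smul, ← AddChar.map_add_eq_mul, add_comm b a, symp_apply]
  congr 2
  ring

/-- The phase in `pauli_comm` is determined by the two operators. -/
lemma eq_symp_of_comm (p : ℕ) [NeZero p] {a b : Label p} {t : ZMod p}
    (h : pauli p a * pauli p b = chi p t • (pauli p b * pauli p a)) : symp p a b = t := by
  rw [pauli_comm p a b] at h
  refine chi_injective p (smul_left_injective ℂ ?_ h)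
  rw [pauli_mul]
  exact smul_ne_zero (chi_ne_zero p _) (pauli_ne_zero p _)

lemma symp_eq_zero_of_commute (p : ℕ) [NeZero p] {a b : Label p}
    (h : Commute (pauli p a) (pauli p b)) : symp p a b = 0 :=
  eq_symp_of_comm p (by simpa using h.eq)

lemma symp_ker (p : ℕ) (a : Label p) (h : ∀ b, symp p a b = 0) : a = 0 := by
  obtain ⟨m, n, k, l⟩ := a
  have h1 := h (1, 0, 0, 0)
  have h2 := h (0, 1, 0, 0)
  have h3 := h (0, 0, 1, 0)
  have h4 := h (0, 0, 0, 1)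
  simp [symp_apply] at h1 h2 h3 h4
  simp [h1, h2, h3, h4]

/-- A Pauli operator determines its commutation phases with all others, hence its label, by
nondegeneracy of the symplectic form. -/
lemma pauli_injective (p : ℕ) [NeZero p] : Function.Injective (pauli p) := by
  intro a b hab
  refine sub_eq_zero.mp (symp_ker p _ fun c => ?_)
  have h := pauli_comm p b c
  rw [← hab] at h
  rw [map_sub, LinearMap.sub_apply, eq_symp_of_comm p h, sub_self]

/-! ### Lagrangian planes -/

/-- A totally isotropic subspace of the four-dimensional symplectic space has dimension at
most two. -/
lemma finrank_le_two (p : ℕ) [Fact p.Prime] (W : Submodule (ZMod p) (Label p))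
    (hW : ∀ a ∈ W, ∀ b ∈ W, symp p a b = 0) : Module.finrank (ZMod p) W ≤ 2 := by
  have hker : (symp p).ker = ⊥ := by
    rw [LinearMap.ker_eq_bot']
    intro a ha
    exact symp_ker p a fun b => by rw [ha]; rfl
  have h := LinearMap.BilinForm.finrank_add_finrank_orthogonal' (B := symp p) W
  rw [hker, inf_bot_eq, finrank_bot, add_zero] at h
  have hle : W ≤ (symp p).orthogonal W := fun b hb => by
    rw [LinearMap.BilinForm.mem_orthogonal_iff]
    exact fun a ha => hW a ha b hb
  have h1 := Submodule.finrank_mono hle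
  have h2 : Module.finrank (ZMod p) (Label p) = 4 := by simp
  omega

lemma ncard_submodule (p : ℕ) [Fact p.Prime] (W : Submodule (ZMod p) (Label p)) :
    (W : Set (Label p)).ncard = p ^ Module.finrank (ZMod p) W := by
  change Nat.card W = _
  rw [Module.natCard_eq_pow_finrank (K := ZMod p), Nat.card_zmod]

/-- A maximal commuting class consists of the operators labelled by the nonzero vectors of a
Lagrangian plane. -/
lemma exists_lagrangian (p : ℕ) [NeZero p] (hp : p.Prime) {C : Set (PauliMat p)}
    (hC : MaxCommClass p C) :
    ∃ W : Submodule (ZMod p) (Label p), Module.finrank (ZMod p) W = 2 ∧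
      C = pauli p '' (W \ {0}) := by
  have : Fact p.Prime := ⟨hp⟩
  obtain ⟨hsub, hcard, hcomm⟩ := hC
  set L : Set (Label p) := pauli p ⁻¹' C with hL
  have himg : pauli p '' L = C := Set.image_preimage_eq_of_subset fun U hU =>
    (mem_pauliSet_iff p U).mp (hsub hU).1
  have h0 : (0 : Label p) ∉ L := fun h => (hsub h).2 (pauli_zero p)
  have hLcard : L.ncard = p ^ 2 - 1 := by
    rw [← hcard, ← himg, Set.ncard_image_of_injective _ (pauli_injective p)]
  have hiso : ∀ a ∈ Submodule.span (ZMod p) L, ∀ b ∈ Submodule.span (ZMod p) L,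
      symp p a b = 0 := by
    intro a ha b hb
    induction ha, hb using Submodule.span_induction₂ with
    | mem_mem a b ha hb => exact symp_eq_zero_of_commute p (hcomm _ ha _ hb)
    | zero_left => simp
    | zero_right => simp
    | add_left _ _ _ _ _ _ h1 h2 => simp [h1, h2]
    | add_right _ _ _ _ _ _ h1 h2 => simp [h1, h2]
    | smul_left _ _ _ _ _ h => simp [h]
    | smul_right _ _ _ _ _ h => simp [h]
  have hdim := finrank_le_two p _ hiso
  have hpos : 0 < p ^ 2 := pow_pos hp.pos 2
  have hins : (insert 0 L).ncard = p ^ 2 := by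
    rw [Set.ncard_insert_of_notMem h0 (Set.toFinite _), hLcard]
    omega
  have hspan : insert 0 L ⊆ (Submodule.span (ZMod p) L : Set (Label p)) :=
    Set.insert_subset (Submodule.zero_mem _) Submodule.subset_span
  have hle : (Submodule.span (ZMod p) L : Set (Label p)).ncard ≤ (insert 0 L).ncard := by
    rw [ncard_submodule, hins]
    exact Nat.pow_le_pow_right hp.pos hdim
  have heq := Set.eq_of_subset_of_ncard_le hspan hle (Set.toFinite _)
  refine ⟨Submodule.span (ZMod p) L, ?_, ?_⟩
  · have h := ncard_submodule p (Submodule.span (ZMod p) L)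
    rw [← heq, hins] at h
    exact (Nat.pow_right_injective hp.two_le h).symm
  · rw [← heq, Set.insert_sdiff_of_mem _ (Set.mem_singleton _),
      Set.sdiff_singleton_eq_self h0, himg]

/-- Distinct Lagrangian planes meet in at most a line, so distinct maximal commuting classes
share at most `p - 1` operators. -/
lemma ncard_inter_le (p : ℕ) [NeZero p] (hp : p.Prime) {C D : Set (PauliMat p)}
    (hC : MaxCommClass p C) (hD : MaxCommClass p D) (hne : C ≠ D) :
    (C ∩ D).ncard ≤ p - 1 := by
  have : Fact p.Prime := ⟨hp⟩
  obtain ⟨W, hW, rfl⟩ := exists_lagrangian p hp hC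
  obtain ⟨W', hW', rfl⟩ := exists_lagrangian p hp hD
  have hWne : W ≠ W' := by
    rintro rfl
    exact hne rfl
  have hlt : Module.finrank (ZMod p) ↥(W ⊓ W') < 2 := by
    rw [← hW]
    refine Submodule.finrank_lt_finrank_of_lt (lt_of_le_of_ne inf_le_left fun h => ?_)
    exact hWne (Submodule.eq_of_le_of_finrank_eq (inf_eq_left.mp h) (hW.trans hW'.symm))
  have hset : (W \ {0} : Set (Label p)) ∩ (W' \ {0}) = ((W ⊓ W' : Submodule _ _) : Set _) \ {0} := by
    ext a
    simp
    tauto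
  rw [← Set.image_inter (pauli_injective p), Set.ncard_image_of_injective _ (pauli_injective p),
    hset, Set.ncard_sdiff_singleton_of_mem (Submodule.zero_mem _), ncard_submodule]
  have h := Nat.pow_le_pow_right hp.pos (Nat.le_of_lt_succ hlt)
  rw [pow_one] at h
  omega

/-! ### Counting in a complete set -/

lemma finite_pauliSet (p : ℕ) [NeZero p] : (PauliSet p).Finite :=
  (Set.finite_range (pauli p)).subset fun U hU => (mem_pauliSet_iff p U).mp hU

lemma ncard_pauliSet_diff (p : ℕ) [NeZero p] : (PauliSet p \ {1}).ncard = p ^ 4 - 1 := by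
  have h : PauliSet p = pauli p '' Set.univ := by
    ext U
    simp [mem_pauliSet_iff]
  rw [Set.ncard_sdiff_singleton_of_mem ((mem_pauliSet_iff p 1).mpr ⟨0, pauli_zero p⟩), h,
    Set.ncard_image_of_injective _ (pauli_injective p), Set.ncard_univ]
  simp only [Nat.card_prod, Nat.card_zmod]
  ring_nf

/-- By counting, a complete set of classes covers every nontrivial Pauli operator. -/
lemma iUnion_eq (p : ℕ) [NeZero p] (C : Fin (p ^ 2 + 1) → Set (PauliMat p))
    (hmcc : ∀ i, MaxCommClass p (C i)) (hdisj : ∀ i j, i ≠ j → Disjoint (C i) (C j)) :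
    ⋃ i, C i = PauliSet p \ {1} := by
  have hfin : (PauliSet p \ {1}).Finite := (finite_pauliSet p).sdiff
  refine Set.eq_of_subset_of_ncard_le (Set.iUnion_subset fun i => (hmcc i).1) ?_ hfin
  rw [Set.ncard_iUnion_of_finite (fun i => hfin.subset (hmcc i).1)
    (fun i j hij => hdisj i j hij), ncard_pauliSet_diff, finsum_eq_sum_of_fintype]
  simp only [(hmcc _).2.1, Finset.sum_const, Finset.card_univ, Fintype.card_fin, smul_eq_mul]
  rw [← Nat.sq_sub_sq (p ^ 2) 1, ← pow_mul]

/-- If Σ = {C₁,…,C_{p²+1}} is a complete set and there is exactly one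
maximal commuting class D ∉ Σ contained in C₁ ∪ … ∪ C_{p+1}, then D together with
C_{p+2},…,C_{p²+1} is a pairwise disjoint, unextendible set of p² − p + 1 classes. -/
theorem stmt7 (p : ℕ) [NeZero p] (hp : p.Prime) (hodd : Odd p)
    (C : Fin (p ^ 2 + 1) → Set (PauliMat p))
    (hmcc : ∀ i, MaxCommClass p (C i))
    (hdisj : ∀ i j, i ≠ j → Disjoint (C i) (C j))
    (D : Set (PauliMat p))
    (hD : MaxCommClass p D ∧ D ∉ Set.range C ∧
      D ⊆ ⋃ i ∈ {i : Fin (p ^ 2 + 1) | (i : ℕ) < p + 1}, C i)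
    (huniq : ∀ D' : Set (PauliMat p),
      (MaxCommClass p D' ∧ D' ∉ Set.range C ∧
        D' ⊆ ⋃ i ∈ {i : Fin (p ^ 2 + 1) | (i : ℕ) < p + 1}, C i) → D' = D) :
    (insert D {E | ∃ i : Fin (p ^ 2 + 1), p + 1 ≤ (i : ℕ) ∧ E = C i}).Pairwise Disjoint ∧
    (insert D {E | ∃ i : Fin (p ^ 2 + 1), p + 1 ≤ (i : ℕ) ∧ E = C i}).ncard
      = p ^ 2 - p + 1 ∧
    Unextendible p (insert D {E | ∃ i : Fin (p ^ 2 + 1), p + 1 ≤ (i : ℕ) ∧ E = C i}) := by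
  obtain ⟨hDm, hDr, hDsub⟩ := hD
  have hp2 := hp.two_le
  have hpp : p * 2 ≤ p ^ 2 := by nlinarith
  have hcardpos : 0 < p ^ 2 - 1 := by omega
  have hnonempty : ∀ E, MaxCommClass p E → E.Nonempty := fun E hE =>
    Set.nonempty_of_ncard_ne_zero (by rw [hE.2.1]; omega)
  have hinj : Function.Injective C := by
    intro i j hij
    by_contra hne
    have h := hdisj i j hne
    rw [hij, disjoint_self] at h
    exact (hnonempty _ (hmcc j)).ne_empty h
  have hDdisj : ∀ i : Fin (p ^ 2 + 1), p + 1 ≤ (i : ℕ) → Disjoint D (C i) := by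
    intro i hi
    refine Set.disjoint_left.mpr fun U hU hUi => ?_
    obtain ⟨j, hj, hUj⟩ := Set.mem_iUnion₂.mp (hDsub hU)
    have hji : j ≠ i := by
      rintro rfl
      exact absurd hj (not_lt.mpr hi)
    exact Set.disjoint_left.mp (hdisj j i hji) hUj hUi
  -- If `D` missed one of the first `p + 1` classes, the other `p`, each sharing at most `p - 1`
  -- elements with `D`, would have to cover all its `p ^ 2 - 1 > p * (p - 1)` elements.
  have hmeet : ∀ i : Fin (p ^ 2 + 1), (i : ℕ) < p + 1 → ¬ Disjoint D (C i) := by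
    intro i hi hd
    let s : Finset (Fin (p ^ 2 + 1)) :=
      (Finset.univ.filter fun j : Fin (p ^ 2 + 1) => (j : ℕ) < p + 1).erase i
    have hs : s.card = p := by
      rw [Finset.card_erase_of_mem (by simpa using hi), Fin.card_filter_val_lt]
      have : p + 1 ≤ p ^ 2 + 1 := by omega
      simp [this]
    have hcover : D ⊆ ⋃ j ∈ s, (C j ∩ D) := by
      intro U hU
      obtain ⟨j, hj, hUj⟩ := Set.mem_iUnion₂.mp (hDsub hU)
      have hji : j ≠ i := by
        rintro rfl
        exact Set.disjoint_left.mp hd hU hUj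
      exact Set.mem_iUnion₂.mpr ⟨j, Finset.mem_erase.mpr ⟨hji, by simpa using hj⟩, hUj, hU⟩
    have hDfin : D.Finite := (finite_pauliSet p).subset fun U hU => (hDm.1 hU).1
    have h1 := Set.ncard_le_ncard hcover
      (s.finite_toSet.biUnion fun j _ => hDfin.subset Set.inter_subset_right)
    have h2 : (⋃ j ∈ s, (C j ∩ D)).ncard ≤ ∑ j ∈ s, (C j ∩ D).ncard :=
      Finset.set_ncard_biUnion_le s _
    have h3 : ∑ j ∈ s, (C j ∩ D).ncard ≤ s.card • (p - 1) :=
      Finset.sum_le_card_nsmul s _ _ fun j _ =>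
        ncard_inter_le p hp (hmcc j) hDm fun h => hDr ⟨j, h⟩
    rw [hs, smul_eq_mul, Nat.mul_sub, ← sq, mul_one] at h3
    have h4 := hDm.2.1
    omega
  set T : Set (Fin (p ^ 2 + 1)) := {i | p + 1 ≤ (i : ℕ)} with hT
  have hF : {E | ∃ i : Fin (p ^ 2 + 1), p + 1 ≤ (i : ℕ) ∧ E = C i} = C '' T := by
    ext E
    simp only [Set.mem_ofPred_eq, Set.mem_image, hT, eq_comm]
  rw [hF]
  refine ⟨?_, ?_, ?_⟩
  · rw [Set.pairwise_insert_of_symm]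
    constructor
    · rintro _ ⟨i, _, rfl⟩ _ ⟨j, _, rfl⟩ hne
      exact hdisj i j fun h => hne (congrArg C h)
    · rintro _ ⟨i, hi, rfl⟩ _
      exact hDdisj i hi
  · have hTcard : T.ncard = p ^ 2 - p := by
      have h1 : Tᶜ.ncard = p + 1 := by
        have h2 : Tᶜ = ((Finset.univ.filter fun j : Fin (p ^ 2 + 1) => (j : ℕ) < p + 1) :
            Set (Fin (p ^ 2 + 1))) := by
          ext j
          simp [hT]
        rw [h2, Set.ncard_coe_finset, Fin.card_filter_val_lt]
        omega
      have h3 := Set.ncard_add_ncard_compl T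
      rw [h1, Nat.card_fin] at h3
      omega
    have hDT : D ∉ C '' T := fun ⟨i, _, h⟩ => hDr ⟨i, h⟩
    rw [Set.ncard_insert_of_notMem hDT (Set.toFinite _),
      Set.ncard_image_of_injective _ hinj, hTcard]
  · rintro ⟨E, hE, hEsub⟩
    have hdE : ∀ F ∈ insert D (C '' T), Disjoint E F := fun F hF =>
      Set.disjoint_left.mpr fun U hU hUF => (hEsub hU).2 (Or.inr ⟨F, hF, hUF⟩)
    have hED := hdE D (Set.mem_insert _ _)
    by_cases hEr : E ∈ Set.range C
    · obtain ⟨i, rfl⟩ := hEr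
      by_cases hi : p + 1 ≤ (i : ℕ)
      · have h := hdE (C i) (Or.inr ⟨i, hi, rfl⟩)
        rw [disjoint_self] at h
        exact (hnonempty _ hE).ne_empty h
      · exact hmeet i (not_le.mp hi) hED.symm
    · have hEeq : E = D := by
        refine huniq E ⟨hE, hEr, fun U hU => ?_⟩
        have hUP : U ∈ ⋃ i, C i := by
          rw [iUnion_eq p C hmcc hdisj]
          exact hE.1 hU
        obtain ⟨j, hUj⟩ := Set.mem_iUnion.mp hUP
        refine Set.mem_iUnion₂.mpr ⟨j, ?_, hUj⟩
        by_contra hj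
        have hjT : p + 1 ≤ (j : ℕ) := not_lt.mp hj
        exact Set.disjoint_left.mp (hdE (C j) (Or.inr ⟨j, hjT, rfl⟩)) hU hUj
      rw [hEeq, disjoint_self] at hED
      exact (hnonempty _ hDm).ne_empty hED
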